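/- Archimedean Property of Intervals: for all sounds a, b, c, d with L a b and L c d, there exist a natural number n and a function s : ℕ → S such that s 0 = a, C c d (s i) (s (i+1)) for every i < n, and ¬L (s n) b (that is, laying n copies of the interval [c,d] end to end starting from a reaches or passes b). -/

import Mathlib

/-- `x` is identical-pitched with `y`: neither is lower-pitched than the other. -/
def Ident {S : Type*} (L : S → S → Prop) (x y : S) : Prop := ¬ L x y ∧ ¬ L y x

/-!
Laying copies of `[c, d]` end to end from `a` gives an ascending sequence `s`. If every `s n` were
lower than `b`, the sounds lower than some `s n` would be the lower class of a Dedekind cut, with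
cut point `θ`. Let `[e, θ]` be congruent to `[c, d]`. Then `e` is lower than `θ`, hence lower than
some `s n`. Since `[e, θ]` and `[s n, s (n + 1)]` are congruent, so are `[e, s n]` and
`[θ, s (n + 1)]`, and therefore `θ` is lower than `s (n + 1)`. But every sound above `θ` is above
the whole sequence.
-/

section

variable {S : Type*} {L : S → S → Prop} {C : S → S → S → S → Prop}

theorem isStrictWeakOrder_of_separation (irrefl : ∀ x, ¬ L x x)
    (trans : ∀ x y z, L x y → L y z → L x z)
    (separation : ∀ x y z, L x y → ¬ (Ident L x z ∧ Ident L y z)) :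
    IsStrictWeakOrder S L where
  irrefl := irrefl
  trans := trans
  incomp_trans _ y _ hxy hyz :=
    ⟨fun hxz => separation _ _ y hxz ⟨hxy, hyz.symm⟩,
      fun hzx => separation _ _ y hzx ⟨hyz.symm, hxy⟩⟩

namespace Ident

theorem refl [Std.Irrefl L] (x : S) : Ident L x x :=
  ⟨irrefl_of L x, irrefl_of L x⟩

theorem symm {x y : S} (h : Ident L x y) : Ident L y x :=
  And.symm h

theorem trans [IsStrictWeakOrder S L] {x y z : S} (hxy : Ident L x y) (hyz : Ident L y z) :
    Ident L x z :=
  IsStrictWeakOrder.incomp_trans x y z hxy hyz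

end Ident

/-- Dedekind continuity of `L`: every cut of `S` into a lower class `P` and an upper class `Q` has
a cut point. The cut point itself may lie in either class, so discrete orders are allowed. -/
def DedekindContinuous (L : S → S → Prop) : Prop :=
  ∀ P Q : Set S, P.Nonempty → Q.Nonempty → Disjoint P Q → P ∪ Q = Set.univ →
    (∀ p ∈ P, ∀ q ∈ Q, ¬ L q p) →
    ∃ θ : S, (∀ x : S, L x θ → x ∈ P) ∧ (∀ x : S, L θ x → x ∈ Q)

namespace DedekindContinuous

theorem exists_cut_of_bounded [IsStrictOrder S L] (hD : DedekindContinuous L) {s : ℕ → S}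
    (hs : ∀ n, L (s n) (s (n + 1))) {b : S} (hb : ∀ n, L (s n) b) :
    ∃ θ, (∀ x, L x θ → ∃ n, L x (s n)) ∧ ∀ n, ¬ L θ (s n) := by
  obtain ⟨θ, below, above⟩ := hD {x | ∃ n, L x (s n)} {x | ∃ n, L x (s n)}ᶜ
    ⟨s 0, 1, hs 0⟩
    ⟨b, fun ⟨n, hbn⟩ => irrefl_of L b (trans_of L hbn (hb n))⟩
    disjoint_compl_right (Set.union_compl_self _)
    (fun _ ⟨n, hpn⟩ _ hq hqp => hq ⟨n, trans_of L hqp hpn⟩)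
  exact ⟨θ, below, fun n hθn => above (s n) hθn ⟨n + 1, hs n⟩⟩

theorem exists_not_rel [IsStrictOrder S L] (hD : DedekindContinuous L) {s : ℕ → S}
    (hs : ∀ n, L (s n) (s (n + 1)))
    (hstep : ∀ t, ∃ e, L e t ∧ ∀ n, L e (s n) → L t (s (n + 1))) (b : S) :
    ∃ n, ¬ L (s n) b := by
  by_contra! hb
  obtain ⟨θ, below, not_below⟩ := hD.exists_cut_of_bounded hs hb
  obtain ⟨e, heθ, he⟩ := hstep θ
  obtain ⟨n, hen⟩ := below e heθ
  exact not_below (n + 1) (he n hen)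

end DedekindContinuous

/-- `C` is a congruence of directed intervals over the pitch relation `L`, where `C a b c d` reads
"`[a, b]` is congruent to `[c, d]`". The fields are reflexivity, transitivity, motion, the two parts
of regularity, and the addition axiom for the case in which the copies are laid in the opposite
order. -/
structure IsIntervalCongruence (L : S → S → Prop) (C : S → S → S → S → Prop) : Prop where
  of_ident {a a' b b' : S} : Ident L a a' → Ident L b b' → C a b a' b'
  trans {a b c d e f : S} : C a b c d → C c d e f → C a b e f
  motion (x y a : S) : ∃ b, C x y a b ∧ ∀ b', C x y a b' → Ident L b b'
  rel_of_congr {a b c d : S} : L a b → C a b c d → L c d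
  swap_iff {a b c d : S} : L a b → (C a b c d ↔ C b a d c)
  add_of_swap {a b c a' b' c' : S} :
    L a b → L b c → C a b b' a' → C b c c' b' → C a c c' a'

namespace IsIntervalCongruence

theorem exists_right (hC : IsIntervalCongruence L C) (x y a : S) : ∃ b, C x y a b :=
  (hC.motion x y a).imp fun _ => And.left

theorem exists_left (hC : IsIntervalCongruence L C) {x y : S} (hxy : L x y) (b : S) :
    ∃ a, C x y a b :=
  (hC.exists_right y x b).imp fun _ => (hC.swap_iff hxy).2

theorem exists_seq (hC : IsIntervalCongruence L C) (c d a : S) :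
    ∃ s : ℕ → S, s 0 = a ∧ ∀ i, C c d (s i) (s (i + 1)) := by
  choose next hnext using hC.exists_right c d
  refine ⟨fun n => next^[n] a, rfl, fun i => ?_⟩
  simpa only [Function.iterate_succ_apply'] using hnext (next^[i] a)

variable [IsStrictWeakOrder S L]

theorem refl (hC : IsIntervalCongruence L C) (a b : S) : C a b a b :=
  hC.of_ident (.refl a) (.refl b)

theorem ident_right (hC : IsIntervalCongruence L C) {x y a b b' : S} (hb : C x y a b)
    (hb' : C x y a b') : Ident L b b' := by
  obtain ⟨_, _, unique⟩ := hC.motion x y a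
  exact (unique b hb).symm.trans (unique b' hb')

theorem congr_right (hC : IsIntervalCongruence L C) {x y a b b' : S} (h : C x y a b)
    (hb : Ident L b b') : C x y a b' :=
  hC.trans h (hC.of_ident (.refl a) hb)

theorem symm (hC : IsIntervalCongruence L C) {x y u v : S} (h : C x y u v) : C u v x y := by
  obtain ⟨w, hw⟩ := hC.exists_right u v x
  exact hC.congr_right hw (hC.ident_right (hC.trans h hw) (hC.refl x y))

theorem alternate (hC : IsIntervalCongruence L C) {e t x y : S} (het : L e t) (hex : L e x)
    (h : C e t x y) : C e x t y := by
  obtain ⟨z, hz⟩ := hC.exists_right e x t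
  have hxy : L x y := hC.rel_of_congr het h
  have hez : C e y e z := hC.add_of_swap hex hxy hz (hC.symm h)
  exact hC.congr_right hz (hC.ident_right hez (hC.refl e y))

theorem exists_not_rel (hC : IsIntervalCongruence L C) (hD : DedekindContinuous L) {c d : S}
    (hcd : L c d) {s : ℕ → S} (hs : ∀ i, C c d (s i) (s (i + 1))) (b : S) :
    ∃ n, ¬ L (s n) b := by
  refine hD.exists_not_rel (fun n => hC.rel_of_congr hcd (hs n)) (fun t => ?_) b
  obtain ⟨e, he⟩ := hC.exists_left hcd t
  have het : L e t := hC.rel_of_congr hcd he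
  refine ⟨e, het, fun n hen => ?_⟩
  have hcongr : C e t (s n) (s (n + 1)) := hC.trans (hC.symm he) (hs n)
  exact hC.rel_of_congr hen (hC.alternate het hen hcongr)

end IsIntervalCongruence

theorem stmt_10_general [IsStrictWeakOrder S L] (hC : IsIntervalCongruence L C)
    (hD : DedekindContinuous L) (a b : S) {c d : S} (hcd : L c d) :
    ∃ (n : ℕ) (s : ℕ → S), s 0 = a ∧ (∀ i < n, C c d (s i) (s (i + 1))) ∧ ¬ L (s n) b := by
  obtain ⟨s, hs0, hs⟩ := hC.exists_seq c d a
  obtain ⟨n, hn⟩ := hC.exists_not_rel hD hcd hs b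
  exact ⟨n, s, hs0, fun i _ => hs i, hn⟩

end

theorem stmt_10 {S : Type*} (L : S → S → Prop) (C : S → S → S → S → Prop)
    (A1 : ∀ x : S, ¬ L x x)
    (A2 : ∀ x y z : S, L x y → L y z → L x z)
    (A3 : ∃ x y : S, L x y)
    (A4 : ∀ x y z : S, L x y → ¬ (Ident L x z ∧ Ident L y z))
    (A5a : ∀ x : S, ∃ a b : S, L a x ∧ L x b)
    (A5b : ∀ x y : S, L x y → ∃ a : S, L x a ∧ L a y)
    (C1 : ∀ a a' b b' : S, Ident L a a' → Ident L b b' → C a b a' b')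
    (C2 : ∀ a b c d e f : S, C a b c d → C c d e f → C a b e f)
    (C3 : ∀ x y a : S, ∃ b : S, C x y a b ∧ ∀ b' : S, C x y a b' → Ident L b b')
    (C4a : ∀ a b c d : S, L a b → C a b c d → L c d)
    (C4b : ∀ a b c d : S, L a b → (C a b c d ↔ C b a d c))
    (C5a : ∀ a b c a' b' c' : S, L a b → L b c → C a b a' b' → C b c b' c' → C a c a' c')
    (C5b : ∀ a b c a' b' c' : S, L a b → L b c → C a b b' a' → C b c c' b' → C a c c' a')
    (D : ∀ P Q : Set S, P.Nonempty → Q.Nonempty → Disjoint P Q → P ∪ Q = Set.univ →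
      (∀ p ∈ P, ∀ q ∈ Q, ¬ L q p) →
      ∃ θ : S, (∀ x : S, L x θ → x ∈ P) ∧ (∀ x : S, L θ x → x ∈ Q)) :
    ∀ a b c d : S, L a b → L c d →
      ∃ (n : ℕ) (s : ℕ → S), s 0 = a ∧ (∀ i < n, C c d (s i) (s (i + 1))) ∧ ¬ L (s n) b := by
  intro a b c d _ hcd
  have := isStrictWeakOrder_of_separation A1 A2 A4
  have hC : IsIntervalCongruence L C :=
    ⟨C1 _ _ _ _, C2 _ _ _ _ _ _, C3, C4a _ _ _ _, C4b _ _ _ _, C5b _ _ _ _ _ _⟩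
  exact stmt_10_general hC D a b hcd
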